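/- arXiv:math/0609696 — 4 statements merged into one kernel-verified Lean document; each statement's English description precedes it below -/
import Mathlib

section
/- (Theorem 2.1(a)) Let G ⊆ [0,∞) be a Borel set and β ∈ (0, d). If C_{g_{d−β,+}}(G) > 0, then C_{g_{d−β,−}}(G) > 0. -/
open MeasureTheory Complex
open scoped RealInnerProductSpace ENNReal

noncomputable section

/-- `χ_ξ(x) = exp(−|x| Ψ(sign(x) ξ))`. -/
def chi {d : ℕ} (Ψ : EuclideanSpace ℝ (Fin d) → ℂ) (ξ : EuclideanSpace ℝ (Fin d)) (x : ℝ) : ℂ :=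
  Complex.exp (((-|x| : ℝ) : ℂ) * Ψ (Real.sign x • ξ))

/-- `g_{γ,+}(x) = ∫_{ℝ^d} (Re χ_ξ(x))_+ ‖ξ‖^{−γ} dξ`, with values in `[0,∞]`. -/
def gplus {d : ℕ} (Ψ : EuclideanSpace ℝ (Fin d) → ℂ) (γ : ℝ) (x : ℝ) : ℝ≥0∞ :=
  ∫⁻ ξ : EuclideanSpace ℝ (Fin d),
    ENNReal.ofReal (max ((chi Ψ ξ x).re) 0) * (ENNReal.ofReal ‖ξ‖) ^ (-γ) ∂volume

/-- `g_{γ,−}(x) = ∫_{ℝ^d} (Re χ_ξ(x))_− ‖ξ‖^{−γ} dξ`, with values in `[0,∞]`. -/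
def gminus {d : ℕ} (Ψ : EuclideanSpace ℝ (Fin d) → ℂ) (γ : ℝ) (x : ℝ) : ℝ≥0∞ :=
  ∫⁻ ξ : EuclideanSpace ℝ (Fin d),
    ENNReal.ofReal (max (-(chi Ψ ξ x).re) 0) * (ENNReal.ofReal ‖ξ‖) ^ (-γ) ∂volume

/-- The `f`-energy `E_f(μ) = ∫∫_{G×G} f(t−s) μ(dt)μ(ds)` of a measure on `ℝ`,
for a `[0,∞]`-valued kernel `f`. -/
def energyR (f : ℝ → ℝ≥0∞) (G : Set ℝ) (μ : Measure ℝ) : ℝ≥0∞ :=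
  ∫⁻ t in G, ∫⁻ s in G, f (t - s) ∂μ ∂μ

/-- The `f`-capacity `C_f(G) = [inf_{μ ∈ P(G)} E_f(μ)]⁻¹` (with `1/∞ = 0`), the infimum
being over Borel probability measures supported in `G`. -/
def capacityR (f : ℝ → ℝ≥0∞) (G : Set ℝ) : ℝ≥0∞ :=
  (⨅ (μ : Measure ℝ) (_ : IsProbabilityMeasure μ ∧ μ Gᶜ = 0), energyR f G μ)⁻¹

theorem meas_sign_aux : Measurable Real.sign := by
  have : Real.sign = fun r : ℝ => if r < 0 then (-1 : ℝ) else if 0 < r then 1 else 0 := by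
    funext r; rfl
  rw [this]
  exact Measurable.ite measurableSet_Iio measurable_const
    (Measurable.ite measurableSet_Ioi measurable_const measurable_const)

theorem meas_chi_aux {d : ℕ} (Ψ : EuclideanSpace ℝ (Fin d) → ℂ) (hΨ : Measurable Ψ) :
    Measurable fun p : EuclideanSpace ℝ (Fin d) × ℝ => chi Ψ p.1 p.2 := by
  unfold chi
  have h1 : Measurable fun p : EuclideanSpace ℝ (Fin d) × ℝ => Real.sign p.2 • p.1 :=
    (meas_sign_aux.comp measurable_snd).smul measurable_fst
  have h2 : Measurable fun p : EuclideanSpace ℝ (Fin d) × ℝ => Ψ (Real.sign p.2 • p.1) :=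
    hΨ.comp h1
  have h3 : Measurable fun p : EuclideanSpace ℝ (Fin d) × ℝ => (-|p.2| : ℝ) := by
    have := (continuous_abs (G := ℝ)).measurable.comp
      (measurable_snd : Measurable fun p : EuclideanSpace ℝ (Fin d) × ℝ => p.2)
    exact this.neg
  exact Complex.measurable_exp.comp ((Complex.measurable_ofReal.comp h3).mul h2)

theorem energy_swap_aux {d : ℕ} (a : EuclideanSpace ℝ (Fin d) → ℝ → ℝ≥0∞)
    (ha : Measurable fun p : EuclideanSpace ℝ (Fin d) × ℝ => a p.1 p.2)
    (w : EuclideanSpace ℝ (Fin d) → ℝ≥0∞) (hw : Measurable w)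
    (ν : Measure ℝ) [IsFiniteMeasure ν] :
    ∫⁻ t, ∫⁻ s, (∫⁻ ξ, a ξ (t - s) * w ξ) ∂ν ∂ν
      = ∫⁻ ξ, (∫⁻ z, a ξ (z.1 - z.2) ∂(ν.prod ν)) * w ξ := by
  have hm : Measurable fun q : (ℝ × ℝ) × EuclideanSpace ℝ (Fin d) =>
      a q.2 (q.1.1 - q.1.2) * w q.2 := by
    refine Measurable.mul ?_ (hw.comp measurable_snd)
    exact ha.comp (measurable_snd.prodMk
      ((measurable_fst.comp measurable_fst).sub (measurable_snd.comp measurable_fst)))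
  have h1 : Measurable fun z : ℝ × ℝ =>
      ∫⁻ ξ : EuclideanSpace ℝ (Fin d), a ξ (z.1 - z.2) * w ξ := hm.lintegral_prod_right'
  rw [← lintegral_prod (μ := ν) (ν := ν) (fun z : ℝ × ℝ =>
    ∫⁻ ξ : EuclideanSpace ℝ (Fin d), a ξ (z.1 - z.2) * w ξ) h1.aemeasurable]
  rw [lintegral_lintegral_swap hm.aemeasurable]
  refine lintegral_congr fun ξ => ?_
  rw [lintegral_mul_const]
  exact ha.comp (measurable_const.prodMk (measurable_fst.sub measurable_snd))

theorem chi_re_aux {d : ℕ} (Ψ : EuclideanSpace ℝ (Fin d) → ℂ)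
    {Ω : Type*} [MeasurableSpace Ω] (P : Measure Ω) [IsProbabilityMeasure P]
    (X : ℝ → Ω → EuclideanSpace ℝ (Fin d))
    (hXmeas : Measurable fun p : ℝ × Ω => X p.1 p.2)
    (hX : ∀ s t : ℝ, 0 ≤ s → s ≤ t → ∀ ξ : EuclideanSpace ℝ (Fin d),
      ∫ ω, Complex.exp ((⟪ξ, X t ω - X s ω⟫ : ℂ) * Complex.I) ∂P
        = Complex.exp (((-(t - s) : ℝ) : ℂ) * Ψ ξ))
    (ξ : EuclideanSpace ℝ (Fin d)) (t s : ℝ) (ht : 0 ≤ t) (hs : 0 ≤ s) :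
    (chi Ψ ξ (t - s)).re = ∫ ω, Real.cos (⟪ξ, X t ω⟫ - ⟪ξ, X s ω⟫) ∂P := by
  have key : chi Ψ ξ (t - s) =
      ∫ ω, Complex.exp ((⟪ξ, X t ω - X s ω⟫ : ℂ) * Complex.I) ∂P := by
    unfold chi
    rcases lt_trichotomy s t with h | h | h
    · rw [hX s t hs h.le, Real.sign_of_pos (sub_pos.2 h), abs_of_pos (sub_pos.2 h), one_smul]
    · subst h
      simp
    · rw [Real.sign_of_neg (sub_neg.2 h), abs_of_neg (sub_neg.2 h), neg_one_smul]
      have := hX t s ht h.le (-ξ)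
      rw [neg_sub, ← this]
      refine integral_congr_ae (Filter.Eventually.of_forall fun ω => ?_)
      have : (⟪-ξ, X s ω - X t ω⟫ : ℝ) = ⟪ξ, X t ω - X s ω⟫ := by
        rw [inner_neg_left, ← inner_neg_right, neg_sub]
      simp only [this]
  have hm : ∀ t, Measurable fun ω => (⟪ξ, X t ω⟫ : ℝ) := fun t =>
    measurable_const.inner (hXmeas.comp measurable_prodMk_left)
  have hint : Integrable
      (fun ω => Complex.exp ((⟪ξ, X t ω - X s ω⟫ : ℂ) * Complex.I)) P := by
    refine Integrable.of_bound (C := 1) ?_ ?_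
    · refine Measurable.aestronglyMeasurable ?_
      simp_rw [inner_sub_right]
      exact Complex.measurable_exp.comp
        ((Complex.measurable_ofReal.comp ((hm t).sub (hm s))).mul_const _)
    · refine Filter.Eventually.of_forall fun ω => ?_
      rw [Complex.norm_exp_ofReal_mul_I]
  rw [key]
  have := integral_re hint
  simp only [RCLike.re_eq_complex_re] at this
  rw [← this]
  refine integral_congr_ae (Filter.Eventually.of_forall fun ω => ?_)
  simp only [Complex.exp_ofReal_mul_I_re, inner_sub_right]

theorem posdef_aux {d : ℕ} (Ψ : EuclideanSpace ℝ (Fin d) → ℂ) (hΨ : Measurable Ψ)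
    {Ω : Type*} [MeasurableSpace Ω] (P : Measure Ω) [IsProbabilityMeasure P]
    (X : ℝ → Ω → EuclideanSpace ℝ (Fin d))
    (hXmeas : Measurable fun p : ℝ × Ω => X p.1 p.2)
    (hX : ∀ s t : ℝ, 0 ≤ s → s ≤ t → ∀ ξ : EuclideanSpace ℝ (Fin d),
      ∫ ω, Complex.exp ((⟪ξ, X t ω - X s ω⟫ : ℂ) * Complex.I) ∂P
        = Complex.exp (((-(t - s) : ℝ) : ℂ) * Ψ ξ))
    (ξ : EuclideanSpace ℝ (Fin d)) (ν : Measure ℝ) [IsFiniteMeasure ν]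
    (hν : ∀ᵐ t ∂ν, 0 ≤ t) :
    ∫⁻ z, ENNReal.ofReal (max (-(chi Ψ ξ (z.1 - z.2)).re) 0) ∂(ν.prod ν)
      ≤ ∫⁻ z, ENNReal.ofReal (max ((chi Ψ ξ (z.1 - z.2)).re) 0) ∂(ν.prod ν) := by
  set u : ℝ → Ω → ℝ := fun t ω => ⟪ξ, X t ω⟫ with hu
  have hum : Measurable fun p : ℝ × Ω => u p.1 p.2 := measurable_const.inner hXmeas
  have hae : ∀ᵐ z ∂(ν.prod ν),
      (chi Ψ ξ (z.1 - z.2)).re = ∫ ω, Real.cos (u z.1 ω - u z.2 ω) ∂P := by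
    have h1 : ∀ᵐ z ∂(ν.prod ν), 0 ≤ z.1 := Measure.quasiMeasurePreserving_fst.ae hν
    have h2 : ∀ᵐ z ∂(ν.prod ν), 0 ≤ z.2 := Measure.quasiMeasurePreserving_snd.ae hν
    filter_upwards [h1, h2] with z hz1 hz2
    exact chi_re_aux Ψ P X hXmeas hX ξ z.1 z.2 hz1 hz2
  have hFm : Measurable fun q : (ℝ × ℝ) × Ω => Real.cos (u q.1.1 q.2 - u q.1.2 q.2) := by
    refine Real.measurable_cos.comp (Measurable.sub ?_ ?_)
    · exact hum.comp ((measurable_fst.comp measurable_fst).prodMk measurable_snd)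
    · exact hum.comp ((measurable_snd.comp measurable_fst).prodMk measurable_snd)
  have hFi : Integrable (fun q : (ℝ × ℝ) × Ω => Real.cos (u q.1.1 q.2 - u q.1.2 q.2))
      ((ν.prod ν).prod P) :=
    Integrable.of_bound (C := 1) hFm.aestronglyMeasurable
      (Filter.Eventually.of_forall fun q => Real.abs_cos_le_one _)
  have hfi : Integrable (fun z : ℝ × ℝ => (chi Ψ ξ (z.1 - z.2)).re) (ν.prod ν) :=
    hFi.integral_prod_left.congr (hae.mono fun z hz => hz.symm)
  have hpos : 0 ≤ ∫ z, (chi Ψ ξ (z.1 - z.2)).re ∂(ν.prod ν) := by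
    rw [integral_congr_ae hae, integral_integral_swap hFi]
    refine integral_nonneg fun ω => ?_
    have hut : Measurable fun t => u t ω := hum.comp measurable_prodMk_right
    have hc : Integrable (fun t => Real.cos (u t ω)) ν :=
      Integrable.of_bound (C := 1) (Real.measurable_cos.comp hut).aestronglyMeasurable
        (Filter.Eventually.of_forall fun q => Real.abs_cos_le_one _)
    have hs : Integrable (fun t => Real.sin (u t ω)) ν :=
      Integrable.of_bound (C := 1) (Real.measurable_sin.comp hut).aestronglyMeasurable
        (Filter.Eventually.of_forall fun q => Real.abs_sin_le_one _)
    simp only [Real.cos_sub, Pi.zero_apply]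
    rw [integral_add (hc.mul_prod hc) (hs.mul_prod hs),
      integral_prod_mul (fun t => Real.cos (u t ω)) (fun t => Real.cos (u t ω)),
      integral_prod_mul (fun t => Real.sin (u t ω)) (fun t => Real.sin (u t ω))]
    exact add_nonneg (mul_self_nonneg _) (mul_self_nonneg _)
  have hmax : ∀ x : ℝ, ENNReal.ofReal (max x 0) = ENNReal.ofReal x := fun x => by
    rcases le_total x 0 with h | h
    · rw [max_eq_right h, ENNReal.ofReal_of_nonpos h, ENNReal.ofReal_zero]
    · rw [max_eq_left h]
  simp only [hmax]
  rw [integral_eq_lintegral_pos_part_sub_lintegral_neg_part hfi] at hpos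
  have hA : ∫⁻ z, ENNReal.ofReal ((chi Ψ ξ (z.1 - z.2)).re) ∂(ν.prod ν) ≠ ⊤ :=
    hfi.lintegral_lt_top.ne
  have hB : ∫⁻ z, ENNReal.ofReal (-(chi Ψ ξ (z.1 - z.2)).re) ∂(ν.prod ν) ≠ ⊤ :=
    hfi.neg.lintegral_lt_top.ne
  exact (ENNReal.toReal_le_toReal hB hA).1 (sub_nonneg.1 hpos)

theorem energy_le_aux {d : ℕ} (Ψ : EuclideanSpace ℝ (Fin d) → ℂ) (hΨ : Measurable Ψ)
    {Ω : Type*} [MeasurableSpace Ω] (P : Measure Ω) [IsProbabilityMeasure P]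
    (X : ℝ → Ω → EuclideanSpace ℝ (Fin d))
    (hXmeas : Measurable fun p : ℝ × Ω => X p.1 p.2)
    (hX : ∀ s t : ℝ, 0 ≤ s → s ≤ t → ∀ ξ : EuclideanSpace ℝ (Fin d),
      ∫ ω, Complex.exp ((⟪ξ, X t ω - X s ω⟫ : ℂ) * Complex.I) ∂P
        = Complex.exp (((-(t - s) : ℝ) : ℂ) * Ψ ξ))
    (G : Set ℝ) (hG : MeasurableSet G) (hG0 : G ⊆ Set.Ici 0) (γ : ℝ)
    (μ : Measure ℝ) [IsProbabilityMeasure μ] :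
    energyR (gminus Ψ γ) G μ ≤ energyR (gplus Ψ γ) G μ := by
  have hν : ∀ᵐ t ∂(μ.restrict G), 0 ≤ t := by
    filter_upwards [ae_restrict_mem hG] with t ht using hG0 ht
  have hc := Complex.measurable_re.comp (meas_chi_aux Ψ hΨ)
  have hw : Measurable fun ξ : EuclideanSpace ℝ (Fin d) => (ENNReal.ofReal ‖ξ‖) ^ (-γ) :=
    (ENNReal.measurable_ofReal.comp measurable_norm).pow_const _
  unfold energyR gminus gplus
  rw [energy_swap_aux (fun ξ x => ENNReal.ofReal (max (-(chi Ψ ξ x).re) 0))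
      (ENNReal.measurable_ofReal.comp (hc.neg.max measurable_const)) _ hw (μ.restrict G),
    energy_swap_aux (fun ξ x => ENNReal.ofReal (max ((chi Ψ ξ x).re) 0))
      (ENNReal.measurable_ofReal.comp (hc.max measurable_const)) _ hw (μ.restrict G)]
  refine lintegral_mono fun ξ => ?_
  exact mul_le_mul_left (posdef_aux Ψ hΨ P X hXmeas hX ξ (μ.restrict G) hν) _

/-- **Theorem 2.1(a).** Let `X` be a process with Lévy-type exponent `Ψ`
(`E[e^{i⟨ξ, X_t − X_s⟩}] = e^{−(t−s)Ψ(ξ)}` for `0 ≤ s ≤ t`), `G ⊆ [0,∞)` Borel and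
`β ∈ (0,d)`. If `C_{g_{d−β,+}}(G) > 0` then `C_{g_{d−β,−}}(G) > 0`. -/
theorem stmt5 {d : ℕ} (hd : 1 ≤ d) (Ψ : EuclideanSpace ℝ (Fin d) → ℂ) (hΨ : Measurable Ψ)
    {Ω : Type*} [MeasurableSpace Ω] (P : Measure Ω) [IsProbabilityMeasure P]
    (X : ℝ → Ω → EuclideanSpace ℝ (Fin d))
    (hXmeas : Measurable fun p : ℝ × Ω => X p.1 p.2)
    (hX : ∀ s t : ℝ, 0 ≤ s → s ≤ t → ∀ ξ : EuclideanSpace ℝ (Fin d),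
      ∫ ω, Complex.exp ((⟪ξ, X t ω - X s ω⟫ : ℂ) * Complex.I) ∂P
        = Complex.exp (((-(t - s) : ℝ) : ℂ) * Ψ ξ))
    (G : Set ℝ) (hG : MeasurableSet G) (hG0 : G ⊆ Set.Ici 0)
    (β : ℝ) (hβ0 : 0 < β) (hβd : β < d)
    (hcap : 0 < capacityR (gplus Ψ ((d : ℝ) - β)) G) :
    0 < capacityR (gminus Ψ ((d : ℝ) - β)) G := by
  unfold capacityR at hcap ⊢
  rw [ENNReal.inv_pos] at hcap ⊢
  refine ne_top_of_le_ne_top hcap ?_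
  refine iInf_mono fun μ => iInf_mono fun hμ => ?_
  haveI := hμ.1
  exact energy_le_aux Ψ hΨ P X hXmeas hX G hG hG0 _ μ
end
end

section
/- (Theorem 2.1(d), counterexample) Let d = 1 and Ψ(ξ) = −iξ, the Lévy exponent of the deterministic Lévy process X_t = t. For every β ∈ (0, 1): C_{g_{1−β,+}}([0,1]) = 0, yet C_β(X([0,1])) = C_β([0,1]) > 0, where C_β is the capacity with kernel x ↦ |x|^{−β}. Hence C_{g_{d−β,+}}(G) = 0 does not in general imply that C_β(X(G)) = 0 almost surely. -/
open MeasureTheory Complex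
open scoped ENNReal

noncomputable section

/-- `χ_ξ(x) = exp(−|x| Ψ(sign(x) ξ))` for `Ψ : ℝ → ℂ` (the case `d = 1`). -/
def chi1 (Ψ : ℝ → ℂ) (ξ x : ℝ) : ℂ :=
  Complex.exp (((-|x| : ℝ) : ℂ) * Ψ (Real.sign x * ξ))

/-- `g_{γ,+}(x) = ∫_ℝ (Re χ_ξ(x))_+ |ξ|^{−γ} dξ`, with values in `[0,∞]`. -/
def g1plus (Ψ : ℝ → ℂ) (γ : ℝ) (x : ℝ) : ℝ≥0∞ :=
  ∫⁻ ξ : ℝ, ENNReal.ofReal (max ((chi1 Ψ ξ x).re) 0) * (ENNReal.ofReal |ξ|) ^ (-γ) ∂volume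

/-- `g_{γ,−}(x) = ∫_ℝ (Re χ_ξ(x))_− |ξ|^{−γ} dξ`, with values in `[0,∞]`. -/
def g1minus (Ψ : ℝ → ℂ) (γ : ℝ) (x : ℝ) : ℝ≥0∞ :=
  ∫⁻ ξ : ℝ, ENNReal.ofReal (max (-(chi1 Ψ ξ x).re) 0) * (ENNReal.ofReal |ξ|) ^ (-γ) ∂volume

theorem aux_top (a p : ℝ) (ha : 0 < a) (hp : -1 ≤ p) :
    ∫⁻ ξ in Set.Ioi a, (ENNReal.ofReal |ξ|) ^ p = ⊤ := by
  by_contra h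
  have h1 : ¬ IntegrableOn (fun x : ℝ => x ^ p) (Set.Ioi a) := by
    rw [integrableOn_Ioi_rpow_iff ha]; linarith
  apply h1
  refine ⟨(by fun_prop : Measurable fun x : ℝ => x ^ p).aestronglyMeasurable, ?_⟩
  rw [hasFiniteIntegral_iff_enorm]
  refine lt_of_eq_of_lt ?_ (lt_top_iff_ne_top.2 h)
  refine setLIntegral_congr_fun measurableSet_Ioi ?_
  intro x hx
  have hx0 : 0 < x := ha.trans hx
  simp only
  rw [abs_of_pos hx0, ENNReal.ofReal_rpow_of_pos hx0,
    Real.enorm_of_nonneg (Real.rpow_nonneg hx0.le _)]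

theorem aux_fin (p : ℝ) (hp : -1 < p) :
    ∫⁻ ξ in Set.Icc (-1:ℝ) 1, (ENNReal.ofReal |ξ|) ^ p < ⊤ := by
  have h1 : ∫⁻ ξ in Set.Ioc (0:ℝ) 1, (ENNReal.ofReal |ξ|) ^ p < ⊤ := by
    have h := (intervalIntegral.intervalIntegrable_rpow' (a := 0) (b := 1) hp).1.2
    rw [hasFiniteIntegral_iff_enorm] at h
    refine lt_of_eq_of_lt ?_ h
    refine setLIntegral_congr_fun measurableSet_Ioc ?_
    intro x hx
    have hx0 : 0 < x := hx.1
    simp only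
    rw [abs_of_pos hx0, ENNReal.ofReal_rpow_of_pos hx0,
      Real.enorm_of_nonneg (Real.rpow_nonneg hx0.le _)]
  have h1' : ∫⁻ ξ in Set.Icc (0:ℝ) 1, (ENNReal.ofReal |ξ|) ^ p < ⊤ := by
    rwa [← Measure.restrict_congr_set (Ioc_ae_eq_Icc (μ := volume) (a := (0:ℝ)) (b := 1))]
  have h2 : ∫⁻ ξ in Set.Icc (-1:ℝ) 0, (ENNReal.ofReal |ξ|) ^ p < ⊤ := by
    have := (Measure.measurePreserving_neg (volume : Measure ℝ)).setLIntegral_comp_preimage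
      (s := Set.Icc (0:ℝ) 1) measurableSet_Icc
      (f := fun ξ : ℝ => (ENNReal.ofReal |ξ|) ^ p) (by fun_prop)
    rw [← this] at h1'
    simpa using h1'
  rw [← Set.Icc_union_Icc_eq_Icc (b := (0:ℝ)) (by norm_num) (by norm_num)]
  exact (lintegral_union_le _ _ _).trans_lt (ENNReal.add_lt_top.2 ⟨h2, h1'⟩)

theorem aux_shift (r γ a b : ℝ) (ha : 0 ≤ a) (hab : a ≤ b) (hγ : 0 ≤ γ) :
    ∫⁻ ξ in Set.Ioi (0:ℝ), ENNReal.ofReal (max (Real.cos (r * ξ + r * a)) 0)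
        * (ENNReal.ofReal |ξ + b|) ^ (-γ)
      ≤ ∫⁻ ξ : ℝ, ENNReal.ofReal (max (Real.cos (r * ξ)) 0) * (ENNReal.ofReal |ξ|) ^ (-γ) := by
  rw [← lintegral_add_right_eq_self
    (fun ξ : ℝ => ENNReal.ofReal (max (Real.cos (r * ξ)) 0) * (ENNReal.ofReal |ξ|) ^ (-γ)) a]
  refine le_trans ?_ (setLIntegral_le_lintegral (Set.Ioi 0) _)
  refine setLIntegral_mono' measurableSet_Ioi ?_
  intro x hx
  have hx0 : 0 < x := hx
  rw [mul_add]
  refine mul_le_mul_right ?_ _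
  rw [ENNReal.rpow_neg, ENNReal.rpow_neg, ENNReal.inv_le_inv]
  refine ENNReal.rpow_le_rpow (ENNReal.ofReal_le_ofReal ?_) hγ
  rw [abs_of_pos (by linarith), abs_of_pos (by linarith)]
  linarith

theorem aux_trig (u : ℝ) : 1 ≤ max (Real.cos u) 0 + max (Real.cos (u + Real.pi / 2)) 0
    + max (Real.cos (u + Real.pi)) 0 + max (Real.cos (u + 3 * (Real.pi / 2))) 0 := by
  have h3 : Real.cos (u + 3 * (Real.pi / 2)) = Real.sin u := by
    rw [show u + 3 * (Real.pi / 2) = (u + Real.pi / 2) + Real.pi by ring, Real.cos_add_pi,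
      Real.cos_add_pi_div_two, neg_neg]
  rw [h3, Real.cos_add_pi, Real.cos_add_pi_div_two]
  have := Real.sin_sq_add_cos_sq u
  have hs := Real.abs_sin_le_one u
  have hc := Real.abs_cos_le_one u
  have e1 : |Real.cos u| ≤ max (Real.cos u) 0 + max (-Real.cos u) 0 := by
    rcases abs_cases (Real.cos u) with h | h <;> rw [h.1]
    · linarith [le_max_left (Real.cos u) 0, le_max_right (-Real.cos u) 0]
    · linarith [le_max_right (Real.cos u) 0, le_max_left (-Real.cos u) 0]
  have e2 : |Real.sin u| ≤ max (Real.sin u) 0 + max (-Real.sin u) 0 := by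
    rcases abs_cases (Real.sin u) with h | h <;> rw [h.1]
    · linarith [le_max_left (Real.sin u) 0, le_max_right (-Real.sin u) 0]
    · linarith [le_max_right (Real.sin u) 0, le_max_left (-Real.sin u) 0]
  nlinarith [abs_nonneg (Real.sin u), abs_nonneg (Real.cos u), sq_abs (Real.sin u),
    sq_abs (Real.cos u)]

theorem aux_cos_top (r γ : ℝ) (hr : 0 < r) (hγ : 0 ≤ γ) (hγ1 : γ ≤ 1) :
    ∫⁻ ξ : ℝ, ENNReal.ofReal (max (Real.cos (r * ξ)) 0) * (ENNReal.ofReal |ξ|) ^ (-γ) = ⊤ := by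
  set A := ∫⁻ ξ : ℝ, ENNReal.ofReal (max (Real.cos (r * ξ)) 0) * (ENNReal.ofReal |ξ|) ^ (-γ)
    with hA
  have hpi := Real.pi_pos
  set c := Real.pi / 2 / r with hc
  have hc0 : 0 < c := by positivity
  have hrc : r * c = Real.pi / 2 := by rw [hc]; field_simp
  have s0 := aux_shift r γ 0 (3 * c) le_rfl (by linarith) hγ
  have s1 := aux_shift r γ c (3 * c) (by linarith) (by linarith) hγ
  have s2 := aux_shift r γ (2 * c) (3 * c) (by linarith) (by linarith) hγ
  have s3 := aux_shift r γ (3 * c) (3 * c) (by linarith) le_rfl hγ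
  have hsum := add_le_add (add_le_add (add_le_add s0 s1) s2) s3
  rw [← hA, ← lintegral_add_left (by fun_prop), ← lintegral_add_left (by fun_prop),
    ← lintegral_add_left (by fun_prop)] at hsum
  have hlow : ∫⁻ ξ in Set.Ioi (0:ℝ), (ENNReal.ofReal |ξ + 3 * c|) ^ (-γ) = ⊤ := by
    have := (measurePreserving_add_right (volume : Measure ℝ) (3 * c)).setLIntegral_comp_preimage
      (s := Set.Ioi (3 * c)) measurableSet_Ioi
      (f := fun ξ : ℝ => (ENNReal.ofReal |ξ|) ^ (-γ)) (by fun_prop)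
    rw [aux_top _ _ (by positivity) (by linarith)] at this
    simpa using this
  have htop : (⊤ : ℝ≥0∞) ≤ A + A + A + A := by
    rw [← hlow]
    refine le_trans ?_ hsum
    refine lintegral_mono fun x => ?_
    simp only
    rw [← add_mul, ← add_mul, ← add_mul, ← ENNReal.ofReal_add (by positivity) (by positivity),
      ← ENNReal.ofReal_add (by positivity) (by positivity),
      ← ENNReal.ofReal_add (by positivity) (by positivity)]
    have h := aux_trig (r * x)
    rw [show r * (2 * c) = Real.pi by linarith, show r * (3 * c) = 3 * (Real.pi / 2) by linarith,
      hrc, mul_zero, add_zero]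
    calc _ = 1 * (ENNReal.ofReal |x + 3 * c|) ^ (-γ) := (one_mul _).symm
      _ ≤ _ := by
        gcongr
        rw [← ENNReal.ofReal_one]
        exact ENNReal.ofReal_le_ofReal h
  have := top_le_iff.1 htop
  simpa [ENNReal.add_eq_top] using this

theorem aux_g_top (γ x : ℝ) (hγ : 0 ≤ γ) (hγ1 : γ ≤ 1) :
    g1plus (fun ξ : ℝ => -(ξ : ℂ) * Complex.I) γ x = ⊤ := by
  have hchi : ∀ ξ, (chi1 (fun ξ : ℝ => -(ξ : ℂ) * Complex.I) ξ x).re = Real.cos (|x| * ξ) := by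
    intro ξ
    have : |x| * (Real.sign x * ξ) = x * ξ := by
      rw [← mul_assoc, mul_comm |x|]
      congr 1
      rcases lt_trichotomy x 0 with h | h | h
      · rw [Real.sign_of_neg h, abs_of_neg h]; ring
      · simp [h]
      · rw [Real.sign_of_pos h, abs_of_pos h]; ring
    have h2 : ((-|x| : ℝ) : ℂ) * (-((Real.sign x * ξ : ℝ) : ℂ) * Complex.I)
        = ((x * ξ : ℝ) : ℂ) * Complex.I := by
      rw [← this]; push_cast; ring
    unfold chi1
    rw [h2, Complex.exp_ofReal_mul_I_re, ← Real.cos_abs, ← Real.cos_abs (|x| * ξ), abs_mul,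
      abs_mul, abs_abs]
  unfold g1plus
  simp only [hchi]
  rcases eq_or_ne x 0 with rfl | hx
  · simp only [abs_zero, zero_mul, Real.cos_zero]
    have h : (⊤ : ℝ≥0∞) ≤ ∫⁻ ξ : ℝ, (ENNReal.ofReal |ξ|) ^ (-γ) := by
      rw [← aux_top 1 (-γ) one_pos (by linarith)]
      exact setLIntegral_le_lintegral _ _
    simpa using h
  · exact aux_cos_top _ _ (abs_pos.2 hx) hγ hγ1

/-- **Theorem 2.1(d), counterexample.** For `d = 1` and `Ψ(ξ) = −iξ`, the
Lévy exponent of the deterministic Lévy process `X_t = t`: for every `β ∈ (0,1)`,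
`C_{g_{1−β,+}}([0,1]) = 0` yet `C_β(X([0,1])) = C_β([0,1]) > 0`, where `C_β` is the
capacity with kernel `x ↦ |x|^{−β}`. Hence `C_{g_{d−β,+}}(G) = 0` does not imply
`C_β(X(G)) = 0` a.s. in general. -/
theorem stmt16 (β : ℝ) (hβ0 : 0 < β) (hβ1 : β < 1) :
    capacityR (g1plus (fun ξ : ℝ => -(ξ : ℂ) * Complex.I) (1 - β)) (Set.Icc 0 1) = 0 ∧
    capacityR (fun x : ℝ => (ENNReal.ofReal |x|) ^ (-β)) ((fun t : ℝ => t) '' Set.Icc 0 1)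
      = capacityR (fun x : ℝ => (ENNReal.ofReal |x|) ^ (-β)) (Set.Icc 0 1) ∧
    0 < capacityR (fun x : ℝ => (ENNReal.ofReal |x|) ^ (-β)) ((fun t : ℝ => t) '' Set.Icc 0 1) := by
  refine ⟨?_, by simp, ?_⟩
  · unfold capacityR
    rw [ENNReal.inv_eq_zero, iInf_eq_top]
    intro μ
    rw [iInf_eq_top]
    rintro ⟨h1, h2⟩
    have h3 : μ (Set.Icc 0 1) = 1 := by
      rw [prob_compl_eq_zero_iff measurableSet_Icc] at h2
      exact h2
    unfold energyR
    simp only [aux_g_top (1 - β) _ (show 0 ≤ 1 - β by linarith) (by linarith)]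
    simp [h3]
  · rw [Set.image_id']
    unfold capacityR
    rw [ENNReal.inv_pos]
    refine ne_top_of_le_ne_top (aux_fin (-β) (by linarith)).ne ?_
    refine iInf₂_le_of_le (volume.restrict (Set.Icc 0 1)) ⟨⟨by simp⟩, ?_⟩ ?_
    · rw [Measure.restrict_apply measurableSet_Icc.compl]; simp
    · unfold energyR
      rw [Measure.restrict_restrict measurableSet_Icc, Set.inter_self]
      calc _ ≤ ∫⁻ t in Set.Icc (0:ℝ) 1, ∫⁻ ξ in Set.Icc (-1:ℝ) 1, (ENNReal.ofReal |ξ|) ^ (-β) := by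
            refine setLIntegral_mono' measurableSet_Icc ?_
            intro t ht
            have := (Measure.measurePreserving_sub_left (volume : Measure ℝ) t).setLIntegral_comp_preimage
              (s := Set.Icc (-1:ℝ) 1) measurableSet_Icc
              (f := fun ξ : ℝ => (ENNReal.ofReal |ξ|) ^ (-β)) (by fun_prop)
            rw [← this]
            refine lintegral_mono_set ?_
            intro s hs
            simp only [Set.mem_preimage, Set.mem_Icc] at *
            constructor <;> linarith [ht.1, ht.2, hs.1, hs.2]
        _ = _ := by simp
end
end

section
/- (Example 1, minus part) Let d = 1 and Ψ(ξ) = (1 − cos ξ) − i sin ξ, the Lévy exponent of a rate-1 Poisson process. Then for every x ∈ [0, π/3] and every ξ ∈ ℝ, Re χ_ξ(x) = e^{−x(1−cos ξ)} cos(x sin ξ) ≥ (1/2) e^{−2x} ≥ 0; consequently, for every β ∈ (0,1) and every x ∈ [0, π/3], g_{1−β,−}(x) = 0, and for every μ ∈ P([0, π/3]), ∫_ℝ [∫∫ max(−Re χ_ξ(t−s), 0) μ(dt) μ(ds)] |ξ|^{β−1} dξ = 0. -/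
open MeasureTheory Complex
open scoped ENNReal

noncomputable section

theorem chi1_poisson_re (ξ x : ℝ) :
    (chi1 (fun ζ : ℝ => ((1 - Real.cos ζ : ℝ) : ℂ) - (Real.sin ζ : ℂ) * Complex.I) ξ x).re
      = Real.exp (-(|x| * (1 - Real.cos (Real.sign x * ξ))))
        * Real.cos (|x| * Real.sin (Real.sign x * ξ)) := by
  unfold chi1
  rw [Complex.exp_re]
  congr 2
  · simp only [Complex.re_ofReal_mul, Complex.sub_re, Complex.ofReal_re, Complex.mul_I_re,
      Complex.ofReal_im]
    ring
  · simp only [Complex.im_ofReal_mul, Complex.sub_im, Complex.ofReal_re, Complex.mul_I_im,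
      Complex.ofReal_im]
    ring

theorem cos_mul_sin_ge_half (x η : ℝ) (hx : |x| ≤ Real.pi / 3) :
    1 / 2 ≤ Real.cos (|x| * Real.sin η) := by
  rw [← Real.cos_abs, ← Real.cos_pi_div_three]
  apply Real.cos_le_cos_of_nonneg_of_le_pi (abs_nonneg _) (by linarith [Real.pi_pos])
  rw [abs_mul, abs_abs]
  have h := Real.abs_sin_le_one η
  nlinarith [abs_nonneg x]

theorem chi1_poisson_re_ge (ξ x : ℝ) (hx : |x| ≤ Real.pi / 3) :
    (1 / 2) * Real.exp (-(2 * |x|)) ≤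
    (chi1 (fun ζ : ℝ => ((1 - Real.cos ζ : ℝ) : ℂ) - (Real.sin ζ : ℂ) * Complex.I) ξ x).re := by
  rw [chi1_poisson_re, mul_comm]
  have h := cos_mul_sin_ge_half x (Real.sign x * ξ) hx
  have h2 : Real.exp (-(2 * |x|)) ≤ Real.exp (-(|x| * (1 - Real.cos (Real.sign x * ξ)))) := by
    apply Real.exp_le_exp.2
    nlinarith [abs_nonneg x, Real.neg_one_le_cos (Real.sign x * ξ)]
  exact mul_le_mul h2 h (by norm_num) (Real.exp_pos _).le

theorem chi1_poisson_neg (ξ x : ℝ) (hx : |x| ≤ Real.pi / 3) :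
    ENNReal.ofReal (max (-(chi1 (fun ζ : ℝ => ((1 - Real.cos ζ : ℝ) : ℂ)
      - (Real.sin ζ : ℂ) * Complex.I) ξ x).re) 0) = 0 := by
  have h := chi1_poisson_re_ge ξ x hx
  have h2 := Real.exp_pos (-(2 * |x|))
  rw [max_eq_right (by linarith), ENNReal.ofReal_zero]

/-- **Example 1, minus part.** For `d = 1` and
`Ψ(ξ) = (1 − cos ξ) − i sin ξ` (the Lévy exponent of a rate-1 Poisson process): for every
`x ∈ [0, π/3]` and `ξ ∈ ℝ`, `Re χ_ξ(x) = e^{−x(1−cos ξ)} cos(x sin ξ) ≥ (1/2)e^{−2x} ≥ 0`;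
consequently `g_{1−β,−}(x) = 0` on `[0, π/3]` for every `β ∈ (0,1)`, and for every Borel
probability measure `μ` supported in `[0, π/3]`,
`∫_ℝ [∫∫ (−Re χ_ξ(t−s))_+ μ(dt)μ(ds)] |ξ|^{β−1} dξ = 0`. -/
theorem stmt18 (β : ℝ) (hβ0 : 0 < β) (hβ1 : β < 1) :
    (∀ x ∈ Set.Icc (0 : ℝ) (Real.pi / 3), ∀ ξ : ℝ,
      (chi1 (fun ζ : ℝ => ((1 - Real.cos ζ : ℝ) : ℂ) - (Real.sin ζ : ℂ) * Complex.I) ξ x).re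
          = Real.exp (-(x * (1 - Real.cos ξ))) * Real.cos (x * Real.sin ξ) ∧
        (1 / 2) * Real.exp (-(2 * x))
          ≤ (chi1 (fun ζ : ℝ => ((1 - Real.cos ζ : ℝ) : ℂ)
              - (Real.sin ζ : ℂ) * Complex.I) ξ x).re ∧
        (0 : ℝ) ≤ (1 / 2) * Real.exp (-(2 * x))) ∧
    (∀ x ∈ Set.Icc (0 : ℝ) (Real.pi / 3),
      g1minus (fun ζ : ℝ => ((1 - Real.cos ζ : ℝ) : ℂ) - (Real.sin ζ : ℂ) * Complex.I)
        (1 - β) x = 0) ∧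
    (∀ μ : Measure ℝ, IsProbabilityMeasure μ → μ (Set.Icc (0 : ℝ) (Real.pi / 3))ᶜ = 0 →
      ∫⁻ ξ : ℝ,
        (∫⁻ t in Set.Icc (0 : ℝ) (Real.pi / 3), ∫⁻ s in Set.Icc (0 : ℝ) (Real.pi / 3),
          ENNReal.ofReal (max (-(chi1 (fun ζ : ℝ => ((1 - Real.cos ζ : ℝ) : ℂ)
            - (Real.sin ζ : ℂ) * Complex.I) ξ (t - s)).re) 0) ∂μ ∂μ)
          * (ENNReal.ofReal |ξ|) ^ (β - 1) ∂volume = 0) := by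
  refine ⟨?_, ?_, ?_⟩
  · intro x hx ξ
    have hab : |x| = x := abs_of_nonneg hx.1
    refine ⟨?_, ?_, by positivity⟩
    · rw [chi1_poisson_re, hab]
      rcases hx.1.eq_or_lt with h | h
      · simp [← h]
      · rw [Real.sign_of_pos h, one_mul]
    · have h := chi1_poisson_re_ge ξ x (by rw [hab]; exact hx.2)
      rwa [hab] at h
  · intro x hx
    have hab : |x| = x := abs_of_nonneg hx.1
    unfold g1minus
    simp only [chi1_poisson_neg _ x (by rw [hab]; exact hx.2), zero_mul, lintegral_zero]
  · intro μ _ _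
    have key : ∀ ξ : ℝ, (∫⁻ t in Set.Icc (0 : ℝ) (Real.pi / 3),
        ∫⁻ s in Set.Icc (0 : ℝ) (Real.pi / 3),
          ENNReal.ofReal (max (-(chi1 (fun ζ : ℝ => ((1 - Real.cos ζ : ℝ) : ℂ)
            - (Real.sin ζ : ℂ) * Complex.I) ξ (t - s)).re) 0) ∂μ ∂μ) = 0 := by
      intro ξ
      rw [setLIntegral_congr_fun (g := fun _ => 0) measurableSet_Icc]
      · simp
      · intro t ht
        simp only
        rw [setLIntegral_congr_fun (g := fun _ => 0) measurableSet_Icc]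
        · simp
        · intro s hs
          refine chi1_poisson_neg _ _ ?_
          rw [abs_le]
          constructor <;> linarith [ht.1, ht.2, hs.1, hs.2]
    simp only [key, zero_mul, lintegral_zero]
end
end

section
/- (Example 1, plus part) Let d = 1 and Ψ(ξ) = (1 − cos ξ) − i sin ξ, the Lévy exponent of a rate-1 Poisson process. Then for every β ∈ (0,1) and every x ∈ [0, π/3], g_{1−β,+}(x) = ∫_ℝ e^{−x(1−cos ξ)} cos(x sin ξ) |ξ|^{β−1} dξ = +∞; consequently, for every μ ∈ P([0, π/3]), ∫_ℝ [∫∫ max(Re χ_ξ(t−s), 0) μ(dt) μ(ds)] |ξ|^{β−1} dξ = +∞. -/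
open MeasureTheory Complex
open scoped ENNReal

noncomputable section

theorem aux_re (ξ x : ℝ) :
    (chi1 (fun ζ : ℝ => ((1 - Real.cos ζ : ℝ) : ℂ) - (Real.sin ζ : ℂ) * Complex.I) ξ x).re
      = Real.exp (-(|x| * (1 - Real.cos ξ))) * Real.cos (x * Real.sin ξ) := by
  unfold chi1
  rw [Complex.exp_re]
  have h1 : (((-|x| : ℝ) : ℂ) * (((1 - Real.cos (Real.sign x * ξ) : ℝ) : ℂ)
      - (Real.sin (Real.sign x * ξ) : ℂ) * Complex.I)).re
      = -(|x| * (1 - Real.cos (Real.sign x * ξ))) := by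
    rw [Complex.re_ofReal_mul, Complex.sub_re, Complex.re_ofReal_mul, Complex.ofReal_re,
      Complex.I_re]
    ring
  have h2 : (((-|x| : ℝ) : ℂ) * (((1 - Real.cos (Real.sign x * ξ) : ℝ) : ℂ)
      - (Real.sin (Real.sign x * ξ) : ℂ) * Complex.I)).im
      = |x| * Real.sin (Real.sign x * ξ) := by
    rw [Complex.im_ofReal_mul, Complex.sub_im, Complex.im_ofReal_mul, Complex.ofReal_im,
      Complex.I_im]
    ring
  simp only [h1, h2]
  rcases lt_trichotomy x 0 with h | h | h
  · rw [Real.sign_of_neg h, abs_of_neg h]; simp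
  · subst h; simp
  · rw [Real.sign_of_pos h, abs_of_pos h]; simp

theorem aux_lower (ξ x : ℝ) (hx : |x| ≤ Real.pi / 3) :
    Real.exp (-(2 * Real.pi / 3)) * (1 / 2) ≤
      Real.exp (-(|x| * (1 - Real.cos ξ))) * Real.cos (x * Real.sin ξ) := by
  have hpi := Real.pi_pos
  have hc : 1 / 2 ≤ Real.cos (x * Real.sin ξ) := by
    rw [← Real.cos_pi_div_three, ← Real.cos_abs (x * Real.sin ξ)]
    apply Real.cos_le_cos_of_nonneg_of_le_pi (abs_nonneg _) (by linarith)
    rw [abs_mul]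
    nlinarith [Real.abs_sin_le_one ξ, abs_nonneg x]
  have he : Real.exp (-(2 * Real.pi / 3)) ≤ Real.exp (-(|x| * (1 - Real.cos ξ))) := by
    apply Real.exp_le_exp.2
    nlinarith [Real.neg_one_le_cos ξ, Real.cos_le_one ξ, abs_nonneg x]
  exact mul_le_mul he hc (by norm_num) (Real.exp_pos _).le

theorem aux_top_s19 (β : ℝ) (hβ0 : 0 < β) :
    ∫⁻ ξ : ℝ, (ENNReal.ofReal |ξ|) ^ (β - 1) = ⊤ := by
  by_contra hne
  have hn : ¬ IntegrableOn (fun t : ℝ => t ^ (β - 1)) (Set.Ioi 1) := by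
    rw [integrableOn_Ioi_rpow_iff one_pos]; linarith
  apply hn
  refine ⟨(measurable_id.pow_const _).aestronglyMeasurable, ?_⟩
  unfold HasFiniteIntegral
  refine lt_of_le_of_lt ?_ (lt_top_iff_ne_top.2 hne)
  refine le_trans (setLIntegral_mono' measurableSet_Ioi ?_) (setLIntegral_le_lintegral (Set.Ioi 1) _)
  intro t ht
  have ht0 : (0 : ℝ) < t := lt_trans one_pos ht
  rw [abs_of_pos ht0, ENNReal.ofReal_rpow_of_pos ht0, Real.enorm_eq_ofReal (by positivity)]

theorem aux_lint (β : ℝ) (hβ0 : 0 < β) (F : ℝ → ℝ≥0∞)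
    (hF : ∀ ξ, ENNReal.ofReal (Real.exp (-(2 * Real.pi / 3)) * (1 / 2)) ≤ F ξ) :
    ∫⁻ ξ : ℝ, F ξ * (ENNReal.ofReal |ξ|) ^ (β - 1) = ⊤ := by
  rw [eq_top_iff]
  refine le_trans ?_ (lintegral_mono fun ξ => mul_le_mul_left (hF ξ) _)
  rw [lintegral_const_mul' _ _ ENNReal.ofReal_ne_top, aux_top_s19 β hβ0, ENNReal.mul_top]
  exact ne_of_gt (ENNReal.ofReal_pos.2 (by positivity))

/-- **Example 1, plus part.** For `d = 1` and
`Ψ(ξ) = (1 − cos ξ) − i sin ξ` (the Lévy exponent of a rate-1 Poisson process): for every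
`β ∈ (0,1)` and every `x ∈ [0, π/3]`,
`g_{1−β,+}(x) = ∫_ℝ e^{−x(1−cos ξ)} cos(x sin ξ) |ξ|^{β−1} dξ = +∞`; consequently, for
every Borel probability measure `μ` supported in `[0, π/3]`,
`∫_ℝ [∫∫ (Re χ_ξ(t−s))_+ μ(dt)μ(ds)] |ξ|^{β−1} dξ = +∞`. -/
theorem stmt19 (β : ℝ) (hβ0 : 0 < β) (hβ1 : β < 1) :
    (∀ x ∈ Set.Icc (0 : ℝ) (Real.pi / 3),
      g1plus (fun ζ : ℝ => ((1 - Real.cos ζ : ℝ) : ℂ) - (Real.sin ζ : ℂ) * Complex.I)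
          (1 - β) x
        = ∫⁻ ξ : ℝ,
            ENNReal.ofReal (Real.exp (-(x * (1 - Real.cos ξ))) * Real.cos (x * Real.sin ξ))
              * (ENNReal.ofReal |ξ|) ^ (β - 1) ∂volume ∧
      g1plus (fun ζ : ℝ => ((1 - Real.cos ζ : ℝ) : ℂ) - (Real.sin ζ : ℂ) * Complex.I)
        (1 - β) x = ⊤) ∧
    (∀ μ : Measure ℝ, IsProbabilityMeasure μ → μ (Set.Icc (0 : ℝ) (Real.pi / 3))ᶜ = 0 →
      ∫⁻ ξ : ℝ,
        (∫⁻ t in Set.Icc (0 : ℝ) (Real.pi / 3), ∫⁻ s in Set.Icc (0 : ℝ) (Real.pi / 3),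
          ENNReal.ofReal (max ((chi1 (fun ζ : ℝ => ((1 - Real.cos ζ : ℝ) : ℂ)
            - (Real.sin ζ : ℂ) * Complex.I) ξ (t - s)).re) 0) ∂μ ∂μ)
          * (ENNReal.ofReal |ξ|) ^ (β - 1) ∂volume = ⊤) := by
  refine ⟨fun x hx => ⟨?_, ?_⟩, fun μ hμ hG => ?_⟩
  · unfold g1plus
    refine lintegral_congr fun ξ => ?_
    have hl := aux_lower ξ x (by rw [abs_of_nonneg hx.1]; exact hx.2)
    rw [aux_re, max_eq_left (le_trans (by positivity) hl), abs_of_nonneg hx.1, neg_sub]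
  · unfold g1plus
    rw [neg_sub]
    refine aux_lint β hβ0 _ fun ξ => ENNReal.ofReal_le_ofReal ?_
    rw [aux_re]
    exact le_max_of_le_left (aux_lower ξ x (by rw [abs_of_nonneg hx.1]; exact hx.2))
  · refine aux_lint β hβ0 _ fun ξ => ?_
    have h1 : μ (Set.Icc (0 : ℝ) (Real.pi / 3)) = 1 :=
      (prob_compl_eq_zero_iff measurableSet_Icc).1 hG
    have key : ∀ t ∈ Set.Icc (0 : ℝ) (Real.pi / 3), ∀ s ∈ Set.Icc (0 : ℝ) (Real.pi / 3),
        ENNReal.ofReal (Real.exp (-(2 * Real.pi / 3)) * (1 / 2)) ≤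
        ENNReal.ofReal (max ((chi1 (fun ζ : ℝ => ((1 - Real.cos ζ : ℝ) : ℂ)
            - (Real.sin ζ : ℂ) * Complex.I) ξ (t - s)).re) 0) := by
      intro t ht s hs
      refine ENNReal.ofReal_le_ofReal ?_
      rw [aux_re]
      refine le_max_of_le_left (aux_lower ξ _ ?_)
      rw [abs_le]
      constructor <;> linarith [ht.1, ht.2, hs.1, hs.2]
    have := setLIntegral_mono' (μ := μ) measurableSet_Icc fun t ht =>
      setLIntegral_mono' (μ := μ) measurableSet_Icc (key t ht)
    simpa only [setLIntegral_const, h1, mul_one] using this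
end
end
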